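/- arXiv:1610.09553 — 8 statements merged into one kernel-verified Lean document; each statement's English description precedes it below -/
import Mathlib

section
/- Let n ≥ 1 and m ≥ 1. Let x_1,…,x_m ∈ ℝ^n be pairwise distinct points and a_1,…,a_m ∈ ℝ \ {0} be pairwise distinct nonzero amplitudes, and let x'_1,…,x'_m ∈ ℝ^n be pairwise distinct points and a'_1,…,a'_m ∈ ℝ \ {0} be pairwise distinct nonzero amplitudes. Let Γ ⊆ ℝ^n be a set of n·m(m−1)/2 + n + 1 distinct points such that no affine hyperplane of ℝ^n contains more than n points of Γ. If for every y ∈ Γ and every integer l with 0 ≤ l ≤ 2m−1 one has ∑_{k=1}^m a_k ‖y − x_k‖^l = ∑_{k=1}^m a'_k ‖y − x'_k‖^l, then there exists a permutation σ of {1,…,m} such that x'_k = x_{σ(k)} and a'_k = a_{σ(k)} for all k. (This is the uniqueness statement of Theorem 3.1: a distribution f = ∑_{k=1}^m a_k δ_{x_k} is uniquely determined by its spherical mean transform at the points of Γ, since the value of the spherical mean transform R_y f on the test function t ↦ t^l is ∑_k a_k ‖y − x_k‖^l.) -/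
open scoped RealInnerProductSpace

open Finset Polynomial in
/-- Two discrete measures on a field with at most `2 * m` atoms in total agree at every point as
soon as their moments of order at most `2 * m - 1` agree. -/
theorem sum_filter_eq_of_moments_eq {K : Type*} [Field K] [DecidableEq K] {m : ℕ}
    {r r' a a' : Fin m → K}
    (h : ∀ l : ℕ, l ≤ 2 * m - 1 → ∑ k, a k * r k ^ l = ∑ k, a' k * r' k ^ l) (t : K) :
    ∑ k with r k = t, a k = ∑ k with r' k = t, a' k := by
  have hpoly (p : K[X]) (hp : p.natDegree ≤ 2 * m - 1) :
      ∑ k, a k * p.eval (r k) = ∑ k, a' k * p.eval (r' k) := by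
    simp only [Polynomial.eval_eq_sum_range, Finset.mul_sum]
    rw [Finset.sum_comm, Finset.sum_comm (s := (univ : Finset (Fin m)))]
    refine Finset.sum_congr rfl fun l hl => ?_
    simp only [mul_left_comm _ (p.coeff l), ← Finset.mul_sum]
    rw [h l ((Finset.mem_range_succ_iff.mp hl).trans hp)]
  set S : Finset K := univ.image r ∪ univ.image r' with hS
  have hScard : S.card ≤ 2 * m := by
    have h₁ : (univ.image r).card ≤ m := by simpa using card_image_le (s := univ) (f := r)
    have h₂ : (univ.image r').card ≤ m := by simpa using card_image_le (s := univ) (f := r')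
    have : S.card ≤ _ := card_union_le (univ.image r) (univ.image r')
    omega
  by_cases ht : t ∈ S
  · set p : K[X] := ∏ u ∈ S.erase t, (X - C u) with hp
    have hdeg : p.natDegree ≤ 2 * m - 1 := by
      rw [hp, natDegree_finsetProd_X_sub_C_eq_card, card_erase_of_mem ht]
      omega
    have hpt : p.eval t ≠ 0 := by
      rw [hp, eval_prod, prod_ne_zero_iff]
      intro u hu
      simpa [sub_eq_zero] using (ne_of_mem_erase hu).symm
    have hp0 (u : K) (hu : u ∈ S) (hut : u ≠ t) : p.eval u = 0 := by
      rw [hp, eval_prod]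
      exact prod_eq_zero (mem_erase.mpr ⟨hut, hu⟩) (by simp)
    have key (s b : Fin m → K) (hs : ∀ k, s k ∈ S) :
        ∑ k, b k * p.eval (s k) = (∑ k with s k = t, b k) * p.eval t := by
      rw [sum_filter, sum_mul]
      refine sum_congr rfl fun k _ => ?_
      split_ifs with hk
      · rw [hk]
      · rw [hp0 _ (hs k) hk, mul_zero, zero_mul]
    have := hpoly p hdeg
    rw [key r a fun k => by simp [hS], key r' a' fun k => by simp [hS]] at this
    exact mul_right_cancel₀ hpt this
  · have hr (k : Fin m) : r k ≠ t := by rintro rfl; simp [hS] at ht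
    have hr' (k : Fin m) : r' k ≠ t := by rintro rfl; simp [hS] at ht
    simp [hr, hr']

/-- If the nodes `r` are distinct and carry nonzero masses, then a discrete measure with the same
moments of order at most `2 * m - 1` and at most `m` atoms is a relabelling of the first one. -/
theorem exists_perm_of_moments_eq {K : Type*} [Field K] {m : ℕ} {r r' a a' : Fin m → K}
    (hr : Function.Injective r) (ha0 : ∀ k, a k ≠ 0)
    (h : ∀ l : ℕ, l ≤ 2 * m - 1 → ∑ k, a k * r k ^ l = ∑ k, a' k * r' k ^ l) :
    ∃ τ : Equiv.Perm (Fin m), ∀ k, r' (τ k) = r k ∧ a' (τ k) = a k := by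
  classical
  have hmass (k : Fin m) : a k = ∑ j with r' j = r k, a' j := by
    rw [← sum_filter_eq_of_moments_eq h (r k)]
    simp [hr.eq_iff, Finset.filter_eq']
  have hex (k : Fin m) : ∃ j, r' j = r k := by
    by_contra! hne
    exact ha0 k (by rw [hmass k]; simp [hne])
  choose τ hτ using hex
  have hτinj : Function.Injective τ := fun i j hij => hr (by rw [← hτ i, ← hτ j, hij])
  have hτbij : Function.Bijective τ := Finite.injective_iff_bijective.mp hτinj
  refine ⟨Equiv.ofBijective τ hτbij, fun k => ⟨hτ k, ?_⟩⟩
  have hfib : (Finset.univ.filter fun j => r' j = r k) = {τ k} := by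
    ext j
    obtain ⟨i, rfl⟩ := hτbij.2 j
    simp [hτ, hr.eq_iff, hτinj.eq_iff]
  rw [hmass k, hfib, Finset.sum_singleton, Equiv.ofBijective_apply]

/-- The points equidistant from two distinct points lie on an affine hyperplane. -/
theorem exists_hyperplane_of_norm_sub_eq {E : Type*} [NormedAddCommGroup E]
    [InnerProductSpace ℝ E] {p q : E} (hpq : p ≠ q) :
    ∃ (θ : E) (ρ : ℝ), ‖θ‖ = 1 ∧ ∀ y : E, ‖y - p‖ = ‖y - q‖ → ⟪y, θ⟫ = ρ := by
  have hne : q - p ≠ 0 := sub_ne_zero.mpr hpq.symm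
  refine ⟨‖q - p‖⁻¹ • (q - p), ‖q - p‖⁻¹ * ((‖q‖ ^ 2 - ‖p‖ ^ 2) / 2),
    norm_smul_inv_norm (𝕜 := ℝ) hne, fun y hy => ?_⟩
  have hsq : ‖y - p‖ ^ 2 = ‖y - q‖ ^ 2 := by rw [hy]
  rw [norm_sub_sq_real, norm_sub_sq_real] at hsq
  rw [inner_smul_right, inner_sub_right]
  congr 1
  linarith

/-- If every set of points of `Γ` equidistant from two given distinct points has at most `n`
elements, then all but `n * (m * (m - 1)) / 2` points of `Γ` have distinct distances to the
points `x k`. -/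
theorem card_le_card_filter_injective_norm_sub_add {E : Type*} [NormedAddCommGroup E] {n m : ℕ}
    {x : Fin m → E} (hx : Function.Injective x) (Γ : Finset E)
    (hΓ : ∀ p q : E, p ≠ q → (Γ.filter fun y => ‖y - p‖ = ‖y - q‖).card ≤ n)
    [DecidablePred fun y => Function.Injective fun k => ‖y - x k‖] :
    Γ.card ≤ (Γ.filter fun y => Function.Injective fun k => ‖y - x k‖).card
      + n * (m * (m - 1)) / 2 := by
  classical
  rw [← Finset.card_filter_add_card_filter_not
    (s := Γ) fun y => Function.Injective fun k => ‖y - x k‖]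
  refine Nat.add_le_add_left ?_ _
  have hsub : (Γ.filter fun y => ¬ Function.Injective fun k => ‖y - x k‖) ⊆
      Finset.univ.biUnion fun j : Fin m => (Finset.Iio j).biUnion fun i =>
        Γ.filter fun y => ‖y - x i‖ = ‖y - x j‖ := by
    intro y hy
    obtain ⟨hyΓ, hy⟩ := Finset.mem_filter.mp hy
    simp only [Finset.mem_biUnion, Finset.mem_univ, true_and, Finset.mem_Iio, Finset.mem_filter]
    simp only [Function.Injective, not_forall] at hy
    obtain ⟨i, j, hij, hne⟩ := hy
    rcases lt_or_gt_of_ne hne with hlt | hlt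
    · exact ⟨j, i, hlt, hyΓ, hij⟩
    · exact ⟨i, j, hlt, hyΓ, hij.symm⟩
  have hsum : (∑ j : Fin m, (j : ℕ) * n) * 2 = n * (m * (m - 1)) := by
    rw [Fin.sum_univ_eq_sum_range (fun j => j * n), ← Finset.sum_mul, mul_right_comm,
      Finset.sum_range_id_mul_two, mul_comm]
  calc _ ≤ _ := Finset.card_le_card hsub
    _ ≤ ∑ j : Fin m, (j : ℕ) * n := by
      refine Finset.card_biUnion_le.trans (Finset.sum_le_sum fun j _ => ?_)
      refine (Finset.card_biUnion_le_card_mul _ _ n fun i hi => ?_).trans_eq (by rw [Fin.card_Iio])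
      exact hΓ _ _ (hx.ne (Finset.mem_Iio.mp hi).ne)
    _ ≤ _ := by omega

/-- Uniqueness statement of Theorem 3.1: a distribution `f = ∑ aₖ δ_{xₖ}` with pairwise
distinct nodes and pairwise distinct nonzero amplitudes is uniquely determined by the
moments `∑ₖ aₖ ‖y - xₖ‖ˡ`, `0 ≤ l ≤ 2m - 1`, of its spherical mean transform at the points
of a set `Γ` of `n·m(m-1)/2 + n + 1` points, no `n + 1` of which lie on a common affine
hyperplane. -/
theorem stmt0 (n m : ℕ) (hn : 1 ≤ n) (hm : 1 ≤ m)
    (x x' : Fin m → EuclideanSpace ℝ (Fin n)) (a a' : Fin m → ℝ)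
    (hx : Function.Injective x) (hx' : Function.Injective x')
    (ha0 : ∀ k, a k ≠ 0) (ha'0 : ∀ k, a' k ≠ 0)
    (ha : Function.Injective a) (ha' : Function.Injective a')
    (Γ : Finset (EuclideanSpace ℝ (Fin n)))
    (hΓcard : Γ.card = n * (m * (m - 1)) / 2 + n + 1)
    (hΓ : ∀ (θ : EuclideanSpace ℝ (Fin n)) (ρ : ℝ), ‖θ‖ = 1 →
      (Γ.filter (fun y => ⟪y, θ⟫ = ρ)).card ≤ n)
    (hdata : ∀ y ∈ Γ, ∀ l : ℕ, l ≤ 2 * m - 1 →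
      ∑ k, a k * ‖y - x k‖ ^ l = ∑ k, a' k * ‖y - x' k‖ ^ l) :
    ∃ σ : Equiv.Perm (Fin m), ∀ k, x' k = x (σ k) ∧ a' k = a (σ k) := by
  classical
  have hbis (p q : EuclideanSpace ℝ (Fin n)) (hpq : p ≠ q) :
      (Γ.filter fun y => ‖y - p‖ = ‖y - q‖).card ≤ n := by
    obtain ⟨θ, ρ, hθ, h⟩ := exists_hyperplane_of_norm_sub_eq hpq
    exact (Finset.card_le_card (Finset.monotone_filter_right _ fun y _ => h y)).trans (hΓ θ ρ hθ)
  set G := Γ.filter fun y => Function.Injective fun k => ‖y - x k‖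
  have hGcard : n < G.card := by
    have : Γ.card ≤ G.card + _ := card_le_card_filter_injective_norm_sub_add hx Γ hbis
    omega
  have hperm (y) (hy : y ∈ G) : ∃ τ : Equiv.Perm (Fin m),
      ∀ k, ‖y - x' (τ k)‖ = ‖y - x k‖ ∧ a' (τ k) = a k := by
    obtain ⟨hyΓ, hinj⟩ := Finset.mem_filter.mp hy
    exact exists_perm_of_moments_eq (r' := fun k => ‖y - x' k‖) hinj ha0 (hdata y hyΓ)
  obtain ⟨y₀, hy₀⟩ : G.Nonempty := Finset.card_pos.mp (by omega)
  obtain ⟨τ, hτ⟩ := hperm y₀ hy₀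
  have hnorm (y) (hy : y ∈ G) (k : Fin m) : ‖y - x' (τ k)‖ = ‖y - x k‖ := by
    obtain ⟨τ', hτ'⟩ := hperm y hy
    rw [ha' ((hτ k).2.trans (hτ' k).2.symm)]
    exact (hτ' k).1
  have hnode (k : Fin m) : x' (τ k) = x k := by
    by_contra hne
    refine absurd (hbis _ _ hne) (not_le.mpr (hGcard.trans_le (Finset.card_le_card fun y hy => ?_)))
    exact Finset.mem_filter.mpr ⟨(Finset.mem_filter.mp hy).1, hnorm y hy k⟩
  refine ⟨τ.symm, fun k => ⟨?_, ?_⟩⟩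
  · simpa using hnode (τ.symm k)
  · simpa using (hτ (τ.symm k)).2
end

section
/- Let n ≥ 1 and m ≥ 1. Let θ_1,…,θ_m and θ'_1,…,θ'_m be unit vectors in ℝ^n, ρ_1,…,ρ_m and ρ'_1,…,ρ'_m be positive reals, and a_1,…,a_m, a'_1,…,a'_m be pairwise distinct nonzero reals (each family pairwise distinct), such that the pairs (θ_1,ρ_1),…,(θ_m,ρ_m) are pairwise distinct and the pairs (θ'_1,ρ'_1),…,(θ'_m,ρ'_m) are pairwise distinct (equivalently, the corresponding hyperplanes ⟨x,θ_k⟩ = ρ_k are pairwise distinct as subsets of ℝ^n, since ρ_k > 0). Let Γ ⊆ ℝ^n be a set of n·m(m−1) + 2n + 1 distinct points such that no affine hyperplane of ℝ^n contains more than n points of Γ. If for every y ∈ Γ and every integer l with 1 ≤ l ≤ 2m one has ∑_{k=1}^m a_k e^{−l(ρ_k − ⟨y,θ_k⟩)^2} = ∑_{k=1}^m a'_k e^{−l(ρ'_k − ⟨y,θ'_k⟩)^2}, then there exists a permutation σ of {1,…,m} such that a'_k = a_{σ(k)}, ρ'_k = ρ_{σ(k)} and θ'_k = θ_{σ(k)}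 for all k. (This is the uniqueness statement of Theorem 3.2: a distribution f = ∑_k a_k δ_{(θ_k,ρ_k)} supported on hyperplanes is uniquely determined by its spherical mean transform at the points of Γ, since evaluating R_y f on the Gaussian test function t ↦ e^{−lt²} yields (π/l)^{(n−1)/2} ∑_k a_k e^{−l(ρ_k − ⟨y,θ_k⟩)^2}.) -/
open scoped RealInnerProductSpace

/-- If the weighted power sums `∑ wᵢ xᵢˡ` of nonzero nodes vanish for `1 ≤ l ≤ |ι|`, then the total
weight carried by each value vanishes. -/
theorem sum_weights_eq_zero_of_power_sums {ι : Type*} [Fintype ι] (w x : ι → ℝ)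
    (hx : ∀ i, x i ≠ 0)
    (h : ∀ l : ℕ, 1 ≤ l → l ≤ Fintype.card ι → ∑ i, w i * x i ^ l = 0) (t : ℝ) :
    ∑ i with x i = t, w i = 0 := by
  classical
  by_cases ht : ∃ i, x i = t
  swap
  · exact Finset.sum_eq_zero fun i hi => absurd ⟨i, (Finset.mem_filter.1 hi).2⟩ ht
  obtain ⟨i₀, hi₀⟩ := ht
  set S : Finset ℝ := (Finset.univ.image x).erase t with hS
  set q : Polynomial ℝ := ∏ s ∈ S, (Polynomial.X - Polynomial.C s) with hq
  have hScard : S.card + 1 ≤ Fintype.card ι := by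
    rw [hS, Finset.card_erase_add_one (Finset.mem_image.2 ⟨i₀, Finset.mem_univ _, hi₀⟩)]
    exact Finset.card_image_le
  have hdeg : q.natDegree = S.card := by
    rw [hq, Polynomial.natDegree_finsetProd_X_sub_C_eq_card]
  have hsum : ∑ i, w i * (x i * q.eval (x i)) = 0 := by
    have hexp : ∀ i, w i * (x i * q.eval (x i))
        = ∑ l ∈ Finset.range (S.card + 1), q.coeff l * (w i * x i ^ (l + 1)) := by
      intro i
      rw [Polynomial.eval_eq_sum_range, hdeg, Finset.mul_sum, Finset.mul_sum]
      exact Finset.sum_congr rfl fun l _ => by ring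
    simp_rw [hexp]
    rw [Finset.sum_comm]
    refine Finset.sum_eq_zero fun l hl => ?_
    rw [← Finset.mul_sum, h (l + 1) (by omega) (by have := Finset.mem_range.1 hl; omega), mul_zero]
  have hq0 : ∀ i, x i ≠ t → q.eval (x i) = 0 := by
    intro i hi
    rw [hq, Polynomial.eval_prod]
    exact Finset.prod_eq_zero
      (Finset.mem_erase.2 ⟨hi, Finset.mem_image_of_mem x (Finset.mem_univ i)⟩) (by simp)
  have hqt : q.eval t ≠ 0 := by
    rw [hq, Polynomial.eval_prod, Finset.prod_ne_zero_iff]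
    intro s hs
    simpa [sub_eq_zero] using (Finset.ne_of_mem_erase hs).symm
  have ht0 : t ≠ 0 := hi₀ ▸ hx i₀
  have hfac : (∑ i with x i = t, w i) * (t * q.eval t) = 0 := by
    rw [Finset.sum_mul, Finset.sum_filter]
    refine (Finset.sum_congr rfl fun i _ => ?_).trans hsum
    split_ifs with hi
    · rw [hi]
    · rw [hq0 i hi]; simp
  exact (mul_eq_zero.1 hfac).resolve_right (mul_ne_zero ht0 hqt)

/-- Two families of `m` weighted nonzero nodes with equal power sums of orders `1, …, 2m` agree up
to a permutation, provided the first one has nonzero weights and pairwise distinct nodes. -/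
theorem exists_perm_of_power_sums_eq {m : ℕ} (a a' x x' : Fin m → ℝ)
    (ha : ∀ k, a k ≠ 0) (hx : ∀ k, x k ≠ 0) (hx' : ∀ k, x' k ≠ 0)
    (hinj : Function.Injective x)
    (h : ∀ l : ℕ, 1 ≤ l → l ≤ 2 * m → ∑ k, a k * x k ^ l = ∑ k, a' k * x' k ^ l) :
    ∃ τ : Equiv.Perm (Fin m), ∀ k, a' (τ k) = a k ∧ x' (τ k) = x k := by
  classical
  have key : ∀ k, ∑ j with x' j = x k, a' j = a k := by
    intro k
    have := sum_weights_eq_zero_of_power_sums (ι := Fin m ⊕ Fin m)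
      (Sum.elim a (fun j => - a' j)) (Sum.elim x x') (by rintro (i | i) <;> simp [hx, hx'])
      (by
        intro l h1 h2
        have h2' : l ≤ 2 * m := by simpa [two_mul] using h2
        simp [Fintype.sum_sum_type, h l h1 h2']) (x k)
    have hself : ∑ i with x i = x k, a i = a k := by simp [Finset.sum_filter, hinj.eq_iff]
    rw [Finset.sum_filter, Fintype.sum_sum_type, ← Finset.sum_filter, ← Finset.sum_filter] at this
    change ∑ i with x i = x k, a i + ∑ j with x' j = x k, -a' j = 0 at this
    rw [hself, Finset.sum_neg_distrib] at this
    linarith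
  have hex : ∀ k, ∃ j, x' j = x k := by
    intro k
    by_contra hcon
    refine ha k ((key k).symm.trans (Finset.sum_eq_zero fun j hj => ?_))
    exact absurd ⟨j, (Finset.mem_filter.1 hj).2⟩ hcon
  choose τ hτ using hex
  have hτinj : Function.Injective τ := fun i j hij => hinj (by rw [← hτ i, ← hτ j, hij])
  have hτbij : Function.Bijective τ := Finite.injective_iff_bijective.1 hτinj
  refine ⟨Equiv.ofBijective τ hτbij, fun k => ⟨?_, hτ k⟩⟩
  have hfil : Finset.univ.filter (fun j => x' j = x k) = {τ k} := by
    ext j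
    obtain ⟨i, rfl⟩ := hτbij.2 j
    simp [hτ, hinj.eq_iff, hτinj.eq_iff]
  have := key k
  rwa [hfil, Finset.sum_singleton] at this

section GeneralPosition

variable {n : ℕ} {Γ : Finset (EuclideanSpace ℝ (Fin n))}

theorem card_filter_inner_eq_le
    (hΓ : ∀ (η : EuclideanSpace ℝ (Fin n)) (c : ℝ), ‖η‖ = 1 →
      (Γ.filter (fun y => ⟪y, η⟫ = c)).card ≤ n)
    (η : EuclideanSpace ℝ (Fin n)) (c : ℝ) (h : η ≠ 0 ∨ c ≠ 0) :
    (Γ.filter (fun y => ⟪y, η⟫ = c)).card ≤ n := by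
  by_cases hη : η = 0
  · have hc : c ≠ 0 := h.resolve_left (not_not.2 hη)
    simp [hη, hc.symm]
  · refine le_trans (Finset.card_le_card ?_) (hΓ (‖η‖⁻¹ • η) (‖η‖⁻¹ * c) (norm_smul_inv_norm hη))
    intro y hy
    rw [Finset.mem_filter] at hy ⊢
    exact ⟨hy.1, by rw [real_inner_smul_right, hy.2]⟩

/-- At most `2n` points of a set in general position are equidistant from two distinct hyperplanes
off the origin. -/
theorem card_filter_equidistant_le
    (hΓ : ∀ (η : EuclideanSpace ℝ (Fin n)) (c : ℝ), ‖η‖ = 1 →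
      (Γ.filter (fun y => ⟪y, η⟫ = c)).card ≤ n)
    {θ₁ θ₂ : EuclideanSpace ℝ (Fin n)} {ρ₁ ρ₂ : ℝ} (h₁ : 0 < ρ₁) (h₂ : 0 < ρ₂)
    (hne : (θ₁, ρ₁) ≠ (θ₂, ρ₂)) :
    (Γ.filter (fun y => (ρ₁ - ⟪y, θ₁⟫) ^ 2 = (ρ₂ - ⟪y, θ₂⟫) ^ 2)).card ≤ 2 * n := by
  classical
  have hminus := card_filter_inner_eq_le hΓ (θ₁ - θ₂) (ρ₁ - ρ₂) (by
    by_contra! hcon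
    exact hne (Prod.ext (sub_eq_zero.1 hcon.1) (sub_eq_zero.1 hcon.2)))
  have hplus := card_filter_inner_eq_le hΓ (θ₁ + θ₂) (ρ₁ + ρ₂) (Or.inr (by positivity))
  refine le_trans (Finset.card_le_card ?_) ((Finset.card_union_le _ _).trans
    ((add_le_add hminus hplus).trans (two_mul n).ge))
  intro y hy
  rw [Finset.mem_filter] at hy
  rw [Finset.mem_union, Finset.mem_filter, Finset.mem_filter, inner_sub_right, inner_add_right]
  rcases sq_eq_sq_iff_eq_or_eq_neg.1 hy.2 with h | h
  · exact Or.inl ⟨hy.1, by linarith⟩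
  · exact Or.inr ⟨hy.1, by linarith⟩

/-- All but `n·m(m-1)` points of a set in general position have pairwise distinct distances to `m`
distinct hyperplanes off the origin. -/
theorem card_filter_not_injective_dist_le
    (hΓ : ∀ (η : EuclideanSpace ℝ (Fin n)) (c : ℝ), ‖η‖ = 1 →
      (Γ.filter (fun y => ⟪y, η⟫ = c)).card ≤ n)
    {m : ℕ} {θ : Fin m → EuclideanSpace ℝ (Fin n)} {ρ : Fin m → ℝ} (hρ : ∀ k, 0 < ρ k)
    (hpairs : Function.Injective (fun k => (θ k, ρ k)))
    [DecidablePred fun y : EuclideanSpace ℝ (Fin n) =>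
      ¬ Function.Injective fun k => (ρ k - ⟪y, θ k⟫) ^ 2] :
    (Γ.filter (fun y => ¬ Function.Injective fun k => (ρ k - ⟪y, θ k⟫) ^ 2)).card
      ≤ n * (m * (m - 1)) := by
  classical
  let E : Fin m → Fin m → Finset (EuclideanSpace ℝ (Fin n)) := fun i j =>
    Γ.filter (fun y => (ρ i - ⟪y, θ i⟫) ^ 2 = (ρ j - ⟪y, θ j⟫) ^ 2)
  have hsub : Γ.filter (fun y => ¬ Function.Injective fun k => (ρ k - ⟪y, θ k⟫) ^ 2)
      ⊆ Finset.univ.biUnion fun j => (Finset.Iio j).biUnion fun i => E i j := by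
    intro y hy
    obtain ⟨hyΓ, hy⟩ := Finset.mem_filter.1 hy
    simp only [Function.Injective, not_forall] at hy
    obtain ⟨i, j, hij, hne⟩ := hy
    simp only [Finset.mem_biUnion, Finset.mem_univ, true_and, Finset.mem_Iio, E,
      Finset.mem_filter]
    rcases lt_or_gt_of_ne hne with h | h
    · exact ⟨j, i, h, hyΓ, hij⟩
    · exact ⟨i, j, h, hyΓ, hij.symm⟩
  have hinner : ∀ j : Fin m, ((Finset.Iio j).biUnion fun i => E i j).card ≤ (j : ℕ) * (2 * n) := by
    intro j
    refine (Finset.card_biUnion_le_card_mul _ _ (2 * n) fun i hi => ?_).trans (by simp)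
    exact card_filter_equidistant_le hΓ (hρ i) (hρ j)
      (hpairs.ne (Finset.mem_Iio.1 hi).ne)
  refine (Finset.card_le_card hsub).trans (Finset.card_biUnion_le.trans
    ((Finset.sum_le_sum fun j _ => hinner j).trans (le_of_eq ?_)))
  rw [← Finset.sum_mul, Fin.sum_univ_eq_sum_range (fun i => i) m, ← mul_assoc,
    Finset.sum_range_id_mul_two, mul_comm]

end GeneralPosition

/-- Uniqueness statement of Theorem 3.2: a distribution `f = ∑ aₖ δ_{(θₖ,ρₖ)}` supported on
pairwise distinct hyperplanes, with pairwise distinct nonzero amplitudes, is uniquely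
determined by the Gaussian moments `∑ₖ aₖ e^{-l(ρₖ - ⟨y,θₖ⟩)²}`, `1 ≤ l ≤ 2m`, of its
spherical mean transform at the points of a set `Γ` of `n·m(m-1) + 2n + 1` points, no
`n + 1` of which lie on a common affine hyperplane. -/
theorem stmt1 (n m : ℕ) (hn : 1 ≤ n) (hm : 1 ≤ m)
    (θ θ' : Fin m → EuclideanSpace ℝ (Fin n)) (ρ ρ' : Fin m → ℝ) (a a' : Fin m → ℝ)
    (hθ : ∀ k, ‖θ k‖ = 1) (hθ' : ∀ k, ‖θ' k‖ = 1)
    (hρ : ∀ k, 0 < ρ k) (hρ' : ∀ k, 0 < ρ' k)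
    (ha0 : ∀ k, a k ≠ 0) (ha'0 : ∀ k, a' k ≠ 0)
    (ha : Function.Injective a) (ha' : Function.Injective a')
    (hpairs : Function.Injective (fun k => (θ k, ρ k)))
    (hpairs' : Function.Injective (fun k => (θ' k, ρ' k)))
    (Γ : Finset (EuclideanSpace ℝ (Fin n)))
    (hΓcard : Γ.card = n * (m * (m - 1)) + 2 * n + 1)
    (hΓ : ∀ (η : EuclideanSpace ℝ (Fin n)) (c : ℝ), ‖η‖ = 1 →
      (Γ.filter (fun y => ⟪y, η⟫ = c)).card ≤ n)
    (hdata : ∀ y ∈ Γ, ∀ l : ℕ, 1 ≤ l → l ≤ 2 * m →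
      ∑ k, a k * Real.exp (-(l : ℝ) * (ρ k - ⟪y, θ k⟫) ^ 2)
        = ∑ k, a' k * Real.exp (-(l : ℝ) * (ρ' k - ⟪y, θ' k⟫) ^ 2)) :
    ∃ σ : Equiv.Perm (Fin m), ∀ k, a' k = a (σ k) ∧ ρ' k = ρ (σ k) ∧ θ' k = θ (σ k) := by
  classical
  set G := Γ.filter (fun y => Function.Injective fun k => (ρ k - ⟪y, θ k⟫) ^ 2) with hG
  have hGcard : 2 * n < G.card := by
    have hbad := card_filter_not_injective_dist_le hΓ hρ hpairs
    have hsplit := Finset.card_filter_add_card_filter_not (s := Γ)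
      (fun y => Function.Injective fun k => (ρ k - ⟪y, θ k⟫) ^ 2)
    rw [← hG] at hsplit
    omega
  have hperm : ∀ y ∈ G, ∃ τ : Equiv.Perm (Fin m), ∀ k, a' (τ k) = a k ∧
      (ρ' (τ k) - ⟪y, θ' (τ k)⟫) ^ 2 = (ρ k - ⟪y, θ k⟫) ^ 2 := by
    intro y hy
    obtain ⟨hyΓ, hinj⟩ := Finset.mem_filter.1 hy
    obtain ⟨τ, hτ⟩ := exists_perm_of_power_sums_eq a a'
      (fun k => Real.exp (-(ρ k - ⟪y, θ k⟫) ^ 2)) (fun k => Real.exp (-(ρ' k - ⟪y, θ' k⟫) ^ 2))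
      ha0 (fun _ => Real.exp_ne_zero _) (fun _ => Real.exp_ne_zero _)
      (fun i j hij => hinj (neg_injective (Real.exp_injective hij)))
      (fun l h1 h2 => by
        simpa only [← Real.exp_nat_mul, mul_neg, neg_mul] using hdata y hyΓ l h1 h2)
    exact ⟨τ, fun k => ⟨(hτ k).1, neg_injective (Real.exp_injective (hτ k).2)⟩⟩
  obtain ⟨y₀, hy₀⟩ : G.Nonempty := Finset.card_pos.1 (by omega)
  obtain ⟨τ, hτ⟩ := hperm y₀ hy₀
  have hagree : ∀ k, (θ' (τ k), ρ' (τ k)) = (θ k, ρ k) := by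
    intro k
    by_contra hne
    have hle := card_filter_equidistant_le hΓ (hρ' (τ k)) (hρ k) hne
    refine absurd (hGcard.trans_le (Finset.card_le_card fun y hy => ?_)) (not_lt.2 hle)
    obtain ⟨υ, hυ⟩ := hperm y hy
    have hk : υ k = τ k := ha' ((hυ k).1.trans (hτ k).1.symm)
    exact Finset.mem_filter.2 ⟨(Finset.mem_filter.1 hy).1, hk ▸ (hυ k).2⟩
  refine ⟨τ.symm, fun k => ?_⟩
  have h1 := (hτ (τ.symm k)).1
  have h2 := hagree (τ.symm k)
  rw [Equiv.apply_symm_apply] at h1 h2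
  exact ⟨h1, congrArg Prod.snd h2, congrArg Prod.fst h2⟩
end

section
/- Let n ≥ 2 and m ≥ 1. Let g : [0,∞) → ℝ be a function whose radial extension g₀(x) = g(‖x‖) belongs to the Schwartz space 𝒮(ℝ^n), and assume ∫_{ℝ^n} g₀(x) dx ≠ 0. Let x_1,…,x_m ∈ ℝ^n be pairwise distinct, a_1,…,a_m ∈ ℝ \ {0} pairwise distinct, and likewise x'_1,…,x'_m pairwise distinct and a'_1,…,a'_m ∈ ℝ \ {0} pairwise distinct. Set f(x) = ∑_{k=1}^m a_k g(‖x − x_k‖) and f'(x) = ∑_{k=1}^m a'_k g(‖x − x'_k‖). Let Γ ⊆ ℝ^n be a set of n·m(m−1)/2 + n + 1 distinct points such that no affine hyperplane of ℝ^n contains more than n points of Γ. If for every y ∈ Γ and every t ≥ 0 one has ∫_{S^{n−1}} f(y + tθ) dσ(θ) = ∫_{S^{n−1}} f'(y + tθ) dσ(θ) (where σ is the surface measure on the unit sphere S^{n−1}), then there exists a permutation σ of {1,…,m} such that x'_k = x_{σ(k)} and a'_k = a_{σ(k)} for all k. -/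
open MeasureTheory
open scoped RealInnerProductSpace

section SphereMeasure
open Module

variable {E : Type*} [NormedAddCommGroup E] [InnerProductSpace ℝ E]

/-- The half of the unit sphere opposite to `v` is the image, under inverse stereographic
projection from `v`, of the part of a ball contained in the hyperplane orthogonal to `v`. -/
lemma mem_image_stereoInvFunAux_of_inner_nonpos {v θ : E} (hv : ‖v‖ = 1) (hθ : ‖θ‖ = 1)
    (hvθ : ⟪v, θ⟫ ≤ 0) :
    θ ∈ (fun w : (ℝ ∙ v)ᗮ => stereoInvFunAux v (w : E)) '' Metric.closedBall 0 2 := by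
  have hne : θ ≠ v := by
    rintro rfl
    rw [real_inner_self_eq_norm_sq, hv] at hvθ
    norm_num at hvθ
  refine ⟨stereoToFun v θ, ?_, ?_⟩
  · rw [mem_closedBall_zero_iff, stereoToFun_apply, norm_smul]
    have h1 : ‖2 / ((1 : ℝ) - innerSL ℝ v θ)‖ ≤ 2 := by
      rw [innerSL_apply_apply, Real.norm_eq_abs, abs_of_nonneg (by apply div_nonneg <;> linarith)]
      exact div_le_self (by norm_num) (by linarith)
    have h2 : ‖(ℝ ∙ v)ᗮ.orthogonalProjectionOnto θ‖ ≤ 1 :=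
      hθ ▸ Submodule.norm_orthogonalProjectionOnto_apply_le _ θ
    calc _ ≤ (2 : ℝ) * 1 := mul_le_mul h1 h2 (norm_nonneg _) (by norm_num)
      _ = 2 := by norm_num
  · exact congrArg Subtype.val (stereo_left_inv hv (x := ⟨θ, by simpa using hθ⟩) hne)

variable [MeasurableSpace E] [BorelSpace E]

/-- Exchanging the center and the radius vector does not change the spherical mean of a radial
function. -/
lemma setIntegral_sphere_norm_add_smul_swap (d : ℝ) (φ : ℝ → ℝ) (x z : E) :
    ∫ θ in Metric.sphere (0 : E) 1, φ ‖z + ‖x‖ • θ‖ ∂μH[d] =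
      ∫ θ in Metric.sphere (0 : E) 1, φ ‖x + ‖z‖ • θ‖ ∂μH[d] := by
  set R := (ℝ ∙ (‖x‖ • z - ‖z‖ • x))ᗮ.reflection
  have hR : R (‖x‖ • z) = ‖z‖ • x :=
    Submodule.reflection_sub (by rw [norm_smul, norm_smul, norm_norm, norm_norm, mul_comm])
  have hpre : R ⁻¹' Metric.sphere (0 : E) 1 = Metric.sphere 0 1 := by
    ext θ; simp
  have hmp := R.toIsometryEquiv.measurePreserving_hausdorffMeasure d
  have hemb : MeasurableEmbedding R.toIsometryEquiv :=
    R.toIsometryEquiv.toHomeomorph.measurableEmbedding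
  have key := hmp.setIntegral_preimage_emb hemb (fun θ => φ ‖x + ‖z‖ • θ‖) (Metric.sphere (0 : E) 1)
  rw [← key]
  change _ = ∫ θ in R ⁻¹' Metric.sphere (0 : E) 1, φ ‖x + ‖z‖ • R θ‖ ∂μH[d]
  rw [hpre]
  refine setIntegral_congr_fun Metric.isClosed_sphere.measurableSet fun θ hθ => congrArg φ ?_
  rw [mem_sphere_zero_iff_norm] at hθ
  have hinner : ‖z‖ * ⟪x, R θ⟫ = ‖x‖ * ⟪z, θ⟫ := by
    rw [← real_inner_smul_left, ← real_inner_smul_left, ← hR, R.inner_map_map]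
  rw [← sq_eq_sq₀ (norm_nonneg _) (norm_nonneg _), norm_add_sq_real, norm_add_sq_real,
    norm_smul, norm_smul, norm_norm, norm_norm, R.norm_map, inner_smul_right, inner_smul_right,
    hinner, hθ]
  ring

variable [FiniteDimensional ℝ E]

lemma hausdorffMeasure_sphere_lt_top {k : ℕ} [Fact (finrank ℝ E = k + 1)] :
    μH[(k : ℝ)] (Metric.sphere (0 : E) 1) < ⊤ := by
  have himage : ∀ v : E, ‖v‖ = 1 →
      μH[(k : ℝ)] ((fun w : (ℝ ∙ v)ᗮ => stereoInvFunAux v (w : E)) '' Metric.closedBall 0 2)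
        < ⊤ := by
    intro v hv
    have hfin : finrank ℝ (ℝ ∙ v)ᗮ = k :=
      Submodule.finrank_orthogonal_span_singleton (norm_ne_zero_iff.mp (by rw [hv]; exact one_ne_zero))
    have hsmooth : ContDiff ℝ 1 (fun w : (ℝ ∙ v)ᗮ => stereoInvFunAux v (w : E)) :=
      contDiff_stereoInvFunAux.comp (ℝ ∙ v)ᗮ.subtypeL.contDiff
    obtain ⟨K, hK⟩ := hsmooth.contDiffOn.exists_lipschitzOnWith one_ne_zero
      (convex_closedBall (0 : (ℝ ∙ v)ᗮ) 2) (isCompact_closedBall _ _)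
    refine (hK.hausdorffMeasure_image_le (Nat.cast_nonneg k)).trans_lt ?_
    refine ENNReal.mul_lt_top (by simp) ?_
    have := isAddHaarMeasure_hausdorffMeasure (E := (ℝ ∙ v)ᗮ)
    rw [hfin] at this
    exact (isCompact_closedBall _ _).measure_lt_top
  have : Nontrivial E := nontrivial_of_finrank_eq_succ (R := ℝ) (n := k) Fact.out
  obtain ⟨v, hv⟩ := exists_norm_eq E zero_le_one
  refine (measure_mono (t := _ ∪ _) fun θ hθ => ?_).trans_lt
    (measure_union_lt_top (himage v hv) (himage (-v) (by rwa [norm_neg])))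
  rw [mem_sphere_zero_iff_norm] at hθ
  rcases le_total ⟪v, θ⟫ 0 with h | h
  · exact Or.inl (mem_image_stereoInvFunAux_of_inner_nonpos hv hθ h)
  · exact Or.inr (mem_image_stereoInvFunAux_of_inner_nonpos (by rwa [norm_neg]) hθ
      (by rw [inner_neg_left]; linarith))

lemma hausdorffMeasure_sphere_pos {k : ℕ} [Fact (finrank ℝ E = k + 1)] :
    0 < μH[(k : ℝ)] (Metric.sphere (0 : E) 1) := by
  have : Nontrivial E := nontrivial_of_finrank_eq_succ (R := ℝ) (n := k) Fact.out
  obtain ⟨v, hv⟩ := exists_norm_eq E zero_le_one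
  have hfin : finrank ℝ (ℝ ∙ v)ᗮ = k :=
    Submodule.finrank_orthogonal_span_singleton (norm_ne_zero_iff.mp (by rw [hv]; exact one_ne_zero))
  have hhaar := isAddHaarMeasure_hausdorffMeasure (E := (ℝ ∙ v)ᗮ)
  rw [hfin] at hhaar
  have hlip : LipschitzWith 1 (ℝ ∙ v)ᗮ.orthogonalProjectionOnto :=
    (ℝ ∙ v)ᗮ.orthogonalProjectionOnto.lipschitzWith_of_opNorm_le
      (Submodule.orthogonalProjectionOnto_norm_le _)
  have hsub : Metric.ball (0 : (ℝ ∙ v)ᗮ) 1 ⊆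
      (ℝ ∙ v)ᗮ.orthogonalProjectionOnto '' Metric.sphere (0 : E) 1 := by
    intro w hw
    rw [mem_ball_zero_iff] at hw
    have hwv : ⟪(w : E), v⟫ = 0 := Submodule.mem_orthogonal_singleton_iff_inner_left.mp w.2
    refine ⟨(w : E) + Real.sqrt (1 - ‖w‖ ^ 2) • v, ?_, ?_⟩
    · rw [mem_sphere_zero_iff_norm, ← sq_eq_sq₀ (norm_nonneg _) zero_le_one, norm_add_sq_real,
        inner_smul_right, hwv, norm_smul, hv, Real.norm_eq_abs, mul_one, sq_abs,
        Real.sq_sqrt (by nlinarith [norm_nonneg w])]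
      simp
    · rw [map_add, map_smul, Submodule.orthogonalProjectionOnto_mem_subspace_eq_self,
        Submodule.orthogonalProjectionOnto_orthogonalComplement_singleton_eq_zero, smul_zero,
        add_zero]
  calc 0 < μH[(k : ℝ)] (Metric.ball (0 : (ℝ ∙ v)ᗮ) 1) :=
        Metric.isOpen_ball.measure_pos _ ⟨0, by simp⟩
    _ ≤ _ := measure_mono hsub
    _ ≤ _ := hlip.hausdorffMeasure_image_le (Nat.cast_nonneg k) _
    _ = _ := by simp

end SphereMeasure

section Moments
open scoped SchwartzMap

variable {E : Type*} [NormedAddCommGroup E] [InnerProductSpace ℝ E]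

lemma norm_sub_smul_pow_eq_sum {θ : E} (hθ : ‖θ‖ = 1) (x : E) (d : ℝ) (j : ℕ) :
    ‖x - d • θ‖ ^ (2 * j) = ∑ p ∈ Finset.range (j + 1), ∑ q ∈ Finset.range (p + 1),
      (p.choose q * j.choose p * d ^ (p - q + 2 * (j - p))) *
        ((‖x‖ ^ 2) ^ q * (-2 * ⟪x, θ⟫) ^ (p - q)) := by
  have hsq : ‖x - d • θ‖ ^ 2 = (‖x‖ ^ 2 + d * (-2 * ⟪x, θ⟫)) + d ^ 2 := by
    rw [norm_sub_sq_real, norm_smul, inner_smul_right, hθ, Real.norm_eq_abs, mul_one, sq_abs]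
    ring
  rw [pow_mul, hsq, add_pow]
  refine Finset.sum_congr rfl fun p _ => ?_
  rw [add_pow, Finset.sum_mul, Finset.sum_mul]
  refine Finset.sum_congr rfl fun q _ => ?_
  rw [mul_pow d, ← pow_mul, pow_add]
  ring

variable [FiniteDimensional ℝ E] [MeasurableSpace E] [BorelSpace E]

lemma SchwartzMap.integrable_moment (f : 𝓢(E, ℝ)) (θ : E) (p q : ℕ) :
    Integrable fun x => (‖x‖ ^ 2) ^ p * (-2 * ⟪x, θ⟫) ^ q * f x := by
  refine ((f.integrable_pow_mul volume (2 * p + q)).const_mul ((2 * ‖θ‖) ^ q)).mono'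
    (by fun_prop) (.of_forall fun x => ?_)
  have h : |-2 * ⟪x, θ⟫| ≤ 2 * ‖θ‖ * ‖x‖ := by
    rw [abs_mul, abs_neg, abs_two, mul_assoc, mul_comm ‖θ‖]
    gcongr
    exact abs_real_inner_le_norm x θ
  calc ‖(‖x‖ ^ 2) ^ p * (-2 * ⟪x, θ⟫) ^ q * f x‖
      = ‖x‖ ^ (2 * p) * |-2 * ⟪x, θ⟫| ^ q * ‖f x‖ := by
        rw [norm_mul, norm_mul, norm_pow, norm_pow, norm_pow, norm_norm, Real.norm_eq_abs (-2 * _),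
          pow_mul]
    _ ≤ ‖x‖ ^ (2 * p) * (2 * ‖θ‖ * ‖x‖) ^ q * ‖f x‖ := by gcongr
    _ = (2 * ‖θ‖) ^ q * (‖x‖ ^ (2 * p + q) * ‖f x‖) := by ring

/-- Odd moments of an even function vanish. -/
lemma integral_moment_eq_zero_of_odd {f : E → ℝ} (hf : ∀ x, f (-x) = f x) (θ : E) (p : ℕ)
    {q : ℕ} (hq : Odd q) : ∫ x, (‖x‖ ^ 2) ^ p * (-2 * ⟪x, θ⟫) ^ q * f x = 0 := by
  have h := integral_neg_eq_self (fun x => (‖x‖ ^ 2) ^ p * (-2 * ⟪x, θ⟫) ^ q * f x) volume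
  have hneg : ∀ x, (‖-x‖ ^ 2) ^ p * (-2 * ⟪-x, θ⟫) ^ q * f (-x) =
      -((‖x‖ ^ 2) ^ p * (-2 * ⟪x, θ⟫) ^ q * f x) := fun x => by
    rw [norm_neg, inner_neg_left, hf, mul_neg, hq.neg_pow]
    ring
  simp_rw [hneg, integral_neg] at h
  linarith

lemma SchwartzMap.integral_norm_pow_mul_comp_add (f : 𝓢(E, ℝ)) {θ : E} (hθ : ‖θ‖ = 1) (d : ℝ)
    (j : ℕ) :
    ∫ x, ‖x‖ ^ (2 * j) * f (x + d • θ) =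
      ∑ p ∈ Finset.range (j + 1), ∑ q ∈ Finset.range (p + 1),
        (p.choose q * j.choose p * d ^ (p - q + 2 * (j - p))) *
          ∫ x, (‖x‖ ^ 2) ^ q * (-2 * ⟪x, θ⟫) ^ (p - q) * f x := by
  have hshift := integral_add_right_eq_self (μ := volume)
    (fun x => ‖x - d • θ‖ ^ (2 * j) * f x) (d • θ)
  simp only [add_sub_cancel_right] at hshift
  simp_rw [hshift, norm_sub_smul_pow_eq_sum hθ, Finset.sum_mul, mul_assoc _ (_ * _) (f _)]
  rw [integral_finsetSum _ fun p _ => integrable_finsetSum _ fun q _ =>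
    (f.integrable_moment θ q (p - q)).const_mul _]
  refine Finset.sum_congr rfl fun p _ => ?_
  rw [integral_finsetSum _ fun q _ => (f.integrable_moment θ q (p - q)).const_mul _]
  exact Finset.sum_congr rfl fun q _ => integral_const_mul _ _

/-- If the even power sums `∑ cᵢ dᵢ^(2l)` vanish for `l < j`, then the combination of the moments
of order `2j` of the translates of an even function by `dᵢ θ` only sees the leading term. -/
lemma SchwartzMap.sum_mul_integral_norm_pow_mul_comp_add (f : 𝓢(E, ℝ)) (hf : ∀ x, f (-x) = f x)
    {θ : E} (hθ : ‖θ‖ = 1) {ι : Type*} [Fintype ι] (c d : ι → ℝ) {j : ℕ}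
    (hcd : ∀ l < j, ∑ i, c i * d i ^ (2 * l) = 0) :
    ∑ i, c i * ∫ x, ‖x‖ ^ (2 * j) * f (x + d i • θ) =
      (∫ x, f x) * ∑ i, c i * d i ^ (2 * j) := by
  simp_rw [f.integral_norm_pow_mul_comp_add hθ, Finset.mul_sum]
  rw [Finset.sum_comm]
  rw [Finset.sum_eq_single_of_mem 0 (by simp)]
  · refine Finset.sum_congr rfl fun i _ => ?_
    simp
    ring
  intro p hp hp0
  rw [Finset.mem_range] at hp
  rw [Finset.sum_comm]
  refine Finset.sum_eq_zero fun q hq => ?_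
  rw [Finset.mem_range] at hq
  rcases Nat.even_or_odd (p - q) with ⟨r, hr⟩ | hodd
  · have hexp : p - q + 2 * (j - p) = 2 * (r + (j - p)) := by omega
    rw [hexp]
    calc _ = (p.choose q * j.choose p * ∫ x, (‖x‖ ^ 2) ^ q * (-2 * ⟪x, θ⟫) ^ (p - q) * f x) *
          ∑ i, c i * d i ^ (2 * (r + (j - p))) := by
          rw [Finset.mul_sum]
          exact Finset.sum_congr rfl fun i _ => by ring
      _ = 0 := by rw [hcd _ (by omega), mul_zero]
  · simp only [integral_moment_eq_zero_of_odd hf θ q hodd, mul_zero, Finset.sum_const_zero]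

lemma SchwartzMap.integrable_norm_add_pow_mul_norm (f : 𝓢(E, ℝ)) {r : ℝ} (hr : 0 ≤ r) (k : ℕ) :
    Integrable fun x => (‖x‖ + r) ^ k * ‖f x‖ := by
  refine (((f.integrable_pow_mul volume k).add
    (f.integrable.norm.const_mul (r ^ k))).const_mul (2 ^ (k - 1))).mono' (by fun_prop)
    (.of_forall fun x => ?_)
  rw [norm_mul, norm_pow, norm_norm, Real.norm_eq_abs, abs_of_nonneg (by positivity)]
  calc (‖x‖ + r) ^ k * ‖f x‖ ≤ (2 ^ (k - 1) * (‖x‖ ^ k + r ^ k)) * ‖f x‖ := by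
        gcongr
        exact add_pow_le (norm_nonneg _) hr k
    _ = 2 ^ (k - 1) * (‖x‖ ^ k * ‖f x‖ + r ^ k * ‖f x‖) := by ring

lemma SchwartzMap.integrable_norm_pow_mul_comp_add (f : 𝓢(E, ℝ)) (w : E) (k : ℕ) :
    Integrable fun x => ‖x‖ ^ k * f (x + w) := by
  have h : Integrable fun x => ‖x - w‖ ^ k * f x := by
    refine (f.integrable_norm_add_pow_mul_norm (norm_nonneg w) k).mono' (by fun_prop)
      (.of_forall fun x => ?_)
    rw [norm_mul, norm_pow, norm_norm]
    gcongr
    exact norm_sub_le x w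
  simpa using h.comp_add_right w

/-- Moments of the translates of a Schwartz function by vectors of bounded norm are jointly
integrable. -/
lemma SchwartzMap.integrable_prod_norm_pow_mul_comp_add (f : 𝓢(E, ℝ)) (d : ℝ) (k : ℕ)
    (μ : Measure E) [IsFiniteMeasure μ] (hμ : ∀ᵐ θ ∂μ, ‖θ‖ = 1) :
    Integrable (fun z : E × E => ‖z.1‖ ^ k * f (z.1 + d • z.2)) (volume.prod μ) := by
  have hmeas : AEStronglyMeasurable (fun z : E × E => ‖z.1‖ ^ k * f (z.1 + d • z.2))
    (volume.prod μ) := by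
    have := f.continuous
    exact Continuous.aestronglyMeasurable (by fun_prop)
  rw [integrable_prod_iff' hmeas]
  refine ⟨.of_forall fun θ => f.integrable_norm_pow_mul_comp_add (d • θ) k, ?_⟩
  refine (integrable_const (∫ x, (‖x‖ + |d|) ^ k * ‖f x‖)).mono'
    hmeas.norm.prod_swap.integral_prod_right' ?_
  filter_upwards [hμ] with θ hθ
  rw [Real.norm_eq_abs, abs_of_nonneg (integral_nonneg fun x => norm_nonneg _)]
  have hshift := integral_add_right_eq_self (μ := volume)
    (fun x => ‖x - d • θ‖ ^ k * ‖f x‖) (d • θ)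
  simp only [add_sub_cancel_right] at hshift
  simp only [norm_mul, norm_pow, norm_norm]
  rw [hshift]
  refine integral_mono_of_nonneg (.of_forall fun x => by positivity)
    (f.integrable_norm_add_pow_mul_norm (abs_nonneg d) k) (.of_forall fun x => ?_)
  dsimp only
  gcongr
  calc ‖x - d • θ‖ ≤ ‖x‖ + ‖d • θ‖ := norm_sub_le _ _
    _ = ‖x‖ + |d| := by rw [norm_smul, hθ, mul_one, Real.norm_eq_abs]

/-- If a linear combination of averages of an even Schwartz function with nonzero integral over
the translates by vectors of length `dᵢ` vanishes, then so do all even power sums. -/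
lemma SchwartzMap.sum_mul_pow_eq_zero (f : 𝓢(E, ℝ)) (hf : ∀ x, f (-x) = f x)
    (hfint : ∫ x, f x ≠ 0) (μ : Measure E) [IsFiniteMeasure μ] [NeZero μ]
    (hμ : ∀ᵐ θ ∂μ, ‖θ‖ = 1) {ι : Type*} [Fintype ι] (c d : ι → ℝ)
    (hcd : ∀ x, ∑ i, c i * ∫ θ, f (x + d i • θ) ∂μ = 0) (j : ℕ) :
    ∑ i, c i * d i ^ (2 * j) = 0 := by
  induction j using Nat.strong_induction_on with
  | _ j ih =>
  have hint := fun i => f.integrable_prod_norm_pow_mul_comp_add (d i) (2 * j) μ hμ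
  have hswap : ∫ θ, ∑ i, c i * (∫ x, ‖x‖ ^ (2 * j) * f (x + d i • θ)) ∂μ = 0 := by
    rw [integral_finsetSum _ fun i _ => (hint i).integral_prod_right.const_mul _]
    calc _ = ∑ i, c i * ∫ x, ∫ θ, ‖x‖ ^ (2 * j) * f (x + d i • θ) ∂μ :=
          Finset.sum_congr rfl fun i _ => by
            rw [integral_const_mul, ← integral_integral_swap
              (f := fun x θ => ‖x‖ ^ (2 * j) * f (x + d i • θ)) (hint i)]
      _ = ∫ x, ∑ i, c i * ∫ θ, ‖x‖ ^ (2 * j) * f (x + d i • θ) ∂μ := by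
          rw [integral_finsetSum _ fun i _ => (hint i).integral_prod_left.const_mul _]
          simp_rw [integral_const_mul]
      _ = ∫ x, ‖x‖ ^ (2 * j) * ∑ i, c i * ∫ θ, f (x + d i • θ) ∂μ := by
          simp_rw [integral_const_mul, Finset.mul_sum, mul_left_comm]
      _ = 0 := by simp [hcd]
  have hconst : ∫ θ, ∑ i, c i * (∫ x, ‖x‖ ^ (2 * j) * f (x + d i • θ)) ∂μ =
      ∫ _, (∫ x, f x) * ∑ i, c i * d i ^ (2 * j) ∂μ := by
    refine integral_congr_ae ?_
    filter_upwards [hμ] with θ hθ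
    exact f.sum_mul_integral_norm_pow_mul_comp_add hf hθ c d ih
  rw [hswap, integral_const, eq_comm, smul_eq_mul] at hconst
  simpa [hfint, measureReal_def, ENNReal.toReal_eq_zero_iff, NeZero.ne μ] using hconst

end Moments

section Combinatorics

/-- A weighted point configuration on the line is determined by its power sums. -/
lemma sum_filter_eq_zero_of_sum_mul_pow_eq_zero {ι K : Type*} [Fintype ι] [Field K] [DecidableEq K]
    (c s : ι → K) (h : ∀ j : ℕ, ∑ i, c i * s i ^ j = 0) (r : K) :
    ∑ i with s i = r, c i = 0 := by
  have hpoly : ∀ p : Polynomial K, ∑ i, c i * p.eval (s i) = 0 := by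
    intro p
    simp_rw [Polynomial.eval_eq_sum_range, Finset.mul_sum]
    rw [Finset.sum_comm]
    refine Finset.sum_eq_zero fun j _ => ?_
    simp_rw [mul_left_comm (c _)]
    rw [← Finset.mul_sum, h, mul_zero]
  set p : Polynomial K :=
    ∏ u ∈ (Finset.univ.image s).erase r, (Polynomial.X - Polynomial.C u) with hp
  have hpr : p.eval r ≠ 0 := by
    rw [hp, Polynomial.eval_prod, Finset.prod_ne_zero_iff]
    intro u hu
    simpa [sub_eq_zero] using (Finset.ne_of_mem_erase hu).symm
  have hps : ∀ i, s i ≠ r → p.eval (s i) = 0 := by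
    intro i hi
    rw [hp, Polynomial.eval_prod]
    exact Finset.prod_eq_zero (i := s i) (by simp [hi]) (by simp)
  have hsum : (∑ i with s i = r, c i) * p.eval r = 0 := by
    rw [← hpoly p, Finset.sum_mul, Finset.sum_filter]
    refine Finset.sum_congr rfl fun i _ => ?_
    split_ifs with hi
    · rw [hi]
    · rw [hps i hi, mul_zero]
  exact (mul_eq_zero.mp hsum).resolve_right hpr

/-- If two weighted configurations of points on the line define the same atomic measure and the
points of the first one are pairwise distinct with nonzero weights, then they agree up to
a permutation. -/
lemma exists_perm_of_sum_filter_eq {ι R S : Type*} [Fintype ι] [AddCommMonoid R] [DecidableEq S]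
    {a a' : ι → R} {s s' : ι → S} (ha : ∀ k, a k ≠ 0) (hs : Function.Injective s)
    (h : ∀ r, ∑ k with s k = r, a k = ∑ k with s' k = r, a' k) :
    ∃ τ : Equiv.Perm ι, ∀ k, s' (τ k) = s k ∧ a' (τ k) = a k := by
  have hleft : ∀ k, ∑ l with s' l = s k, a' l = a k := by
    intro k
    rw [← h]
    exact Finset.sum_eq_single_of_mem k (by simp) fun l hl hlk =>
      absurd (hs (Finset.mem_filter.mp hl).2) hlk
  have hexists : ∀ k, ∃ l, s' l = s k := by
    intro k
    by_contra! hne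
    refine ha k ?_
    rw [← hleft k]
    exact Finset.sum_eq_zero fun l hl => absurd (Finset.mem_filter.mp hl).2 (hne l)
  choose τ hτ using hexists
  have hinj : Function.Injective τ := fun k l hkl => hs (by rw [← hτ k, ← hτ l, hkl])
  have hbij : Function.Bijective τ := Finite.injective_iff_bijective.mp hinj
  refine ⟨Equiv.ofBijective τ hbij, fun k => ⟨hτ k, ?_⟩⟩
  rw [← hleft k, eq_comm]
  refine Finset.sum_eq_single_of_mem (τ k) (by simp [hτ]) fun l hl hlk => ?_
  obtain ⟨k', rfl⟩ := hbij.2 l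
  have : s k' = s k := by rw [← hτ k']; exact (Finset.mem_filter.mp hl).2
  exact absurd (congrArg τ (hs this)) hlk

/-- The perpendicular bisector of two distinct points is an affine hyperplane. -/
lemma exists_unit_norm_sub_eq_norm_sub_iff {E : Type*} [NormedAddCommGroup E]
    [InnerProductSpace ℝ E] {u v : E} (huv : u ≠ v) :
    ∃ (θ : E) (ρ : ℝ), ‖θ‖ = 1 ∧ ∀ y, ‖y - u‖ = ‖y - v‖ ↔ ⟪y, θ⟫ = ρ := by
  have hne : ‖u - v‖ ≠ 0 := norm_ne_zero_iff.mpr (sub_ne_zero.mpr huv)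
  refine ⟨‖u - v‖⁻¹ • (u - v), ‖u - v‖⁻¹ * ((‖u‖ ^ 2 - ‖v‖ ^ 2) / 2), ?_, fun y => ?_⟩
  · rw [norm_smul, norm_inv, norm_norm, inv_mul_cancel₀ hne]
  · rw [inner_smul_right, mul_right_inj' (inv_ne_zero hne), inner_sub_right,
      ← sq_eq_sq₀ (norm_nonneg _) (norm_nonneg _), norm_sub_sq_real, norm_sub_sq_real]
    constructor <;> intro h <;> linarith

/-- If each perpendicular bisector of two of the points `x k` contains at most `n` points of `Γ`,
then the distances to the points `x k` are pairwise distinct for all but few points of `Γ`. -/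
lemma card_le_card_filter_injective_norm_sub {E : Type*} [NormedAddCommGroup E] {m n : ℕ}
    {x : Fin m → E}
    (Γ : Finset E) (hΓ : ∀ u v : E, u ≠ v → (Γ.filter fun y => ‖y - u‖ = ‖y - v‖).card ≤ n)
    (hx : Function.Injective x) [DecidablePred fun y => Function.Injective fun k => ‖y - x k‖] :
    Γ.card ≤ (Γ.filter fun y => Function.Injective fun k => ‖y - x k‖).card +
      m * (m - 1) / 2 * n := by
  classical
  rw [← Finset.card_filter_add_card_filter_not (s := Γ)
    (fun y => Function.Injective fun k => ‖y - x k‖)]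
  gcongr
  calc _ ≤ (Finset.univ.biUnion fun l : Fin m => (Finset.Iio l).biUnion fun k =>
        Γ.filter fun y => ‖y - x k‖ = ‖y - x l‖).card := by
        refine Finset.card_le_card fun y hy => ?_
        obtain ⟨hyΓ, hy⟩ := Finset.mem_filter.mp hy
        simp only [Function.Injective, not_forall] at hy
        obtain ⟨k, l, hkl, hne⟩ := hy
        simp only [Finset.mem_biUnion, Finset.mem_univ, true_and, Finset.mem_Iio,
          Finset.mem_filter]
        rcases lt_or_gt_of_ne hne with hlt | hlt
        · exact ⟨l, k, hlt, hyΓ, hkl⟩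
        · exact ⟨k, l, hlt, hyΓ, hkl.symm⟩
    _ ≤ ∑ l : Fin m, l * n := by
        refine Finset.card_biUnion_le.trans (Finset.sum_le_sum fun l _ => ?_)
        refine (Finset.card_biUnion_le_card_mul _ _ n fun k hk => hΓ _ _ ?_).trans_eq
          (by rw [Fin.card_Iio])
        exact hx.ne (Finset.mem_Iio.mp hk).ne
    _ = m * (m - 1) / 2 * n := by
        rw [← Finset.sum_mul, Fin.sum_univ_eq_sum_range (fun l => l), Finset.sum_range_id]

end Combinatorics

section SphericalMeans
open Module
open scoped SchwartzMap

variable {E : Type*} [NormedAddCommGroup E] [InnerProductSpace ℝ E] [FiniteDimensional ℝ E]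
  [MeasurableSpace E] [BorelSpace E]

/-- The spherical means about `y` of a sum of translates of a radial Schwartz function determine
the weighted configuration of the distances from `y` to the nodes. -/
lemma sum_filter_norm_sub_eq_of_sphericalMean_eq {k m : ℕ} [Fact (finrank ℝ E = k + 1)]
    {g : ℝ → ℝ} (f : 𝓢(E, ℝ)) (hfg : ∀ x, f x = g ‖x‖) (hfint : ∫ x, f x ≠ 0)
    (x x' : Fin m → E) (a a' : Fin m → ℝ) (y : E)
    (h : ∀ t : ℝ, 0 ≤ t →
      (∫ θ in Metric.sphere (0 : E) 1, (∑ i, a i * g ‖y + t • θ - x i‖) ∂μH[(k : ℝ)])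
        = ∫ θ in Metric.sphere (0 : E) 1, (∑ i, a' i * g ‖y + t • θ - x' i‖) ∂μH[(k : ℝ)])
    (r : ℝ) :
    ∑ i with ‖y - x i‖ ^ 2 = r, a i = ∑ i with ‖y - x' i‖ ^ 2 = r, a' i := by
  set μ : Measure E := μH[(k : ℝ)].restrict (Metric.sphere (0 : E) 1) with hμ_def
  have hfinite : IsFiniteMeasure μ := ⟨by
    rw [hμ_def, Measure.restrict_apply_univ]; exact hausdorffMeasure_sphere_lt_top⟩
  have hne : NeZero μ := ⟨by
    rw [hμ_def, Ne, Measure.restrict_eq_zero]; exact hausdorffMeasure_sphere_pos.ne'⟩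
  have hμ : ∀ᵐ θ ∂μ, ‖θ‖ = 1 := by
    filter_upwards [ae_restrict_mem Metric.isClosed_sphere.measurableSet] with θ hθ
    simpa using hθ
  have hmean : ∀ (b : Fin m → ℝ) (w : Fin m → E) (z : E),
      ∫ θ, (∑ i, b i * g ‖y + ‖z‖ • θ - w i‖) ∂μ =
        ∑ i, b i * ∫ θ, f (z + ‖y - w i‖ • θ) ∂μ := by
    intro b w z
    rw [integral_finsetSum]
    · refine Finset.sum_congr rfl fun i _ => ?_
      simp_rw [integral_const_mul, hfg]
      rw [← setIntegral_sphere_norm_add_smul_swap]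
      simp_rw [add_sub_right_comm]
      rfl
    · intro i _
      simp_rw [← hfg]
      have hcont := f.continuous
      exact (Integrable.of_bound (Continuous.aestronglyMeasurable (by fun_prop)) _
        (.of_forall fun θ => f.toBoundedContinuousFunction.norm_coe_le_norm _)).const_mul _
  have hpow := f.sum_mul_pow_eq_zero (fun z => by rw [hfg, hfg, norm_neg]) hfint μ hμ
    (Sum.elim a (-a')) (Sum.elim (fun i => ‖y - x i‖) (fun i => ‖y - x' i‖)) (fun z => by
      have hz := h ‖z‖ (norm_nonneg z)
      rw [hmean, hmean] at hz
      simp [Fintype.sum_sum_type, hz])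
  have hzero := sum_filter_eq_zero_of_sum_mul_pow_eq_zero (Sum.elim a (-a'))
    (Sum.elim (fun i => ‖y - x i‖ ^ 2) (fun i => ‖y - x' i‖ ^ 2)) (fun j => by
      have hj := hpow j
      simp only [Fintype.sum_sum_type, Sum.elim_inl, Sum.elim_inr, pow_mul] at hj ⊢
      exact hj) r
  rw [Finset.sum_filter, Fintype.sum_sum_type] at hzero
  have hzero' : (∑ i, if ‖y - x i‖ ^ 2 = r then a i else 0) +
      (∑ i, if ‖y - x' i‖ ^ 2 = r then -a' i else 0) = 0 := hzero
  rw [← Finset.sum_filter, ← Finset.sum_filter, Finset.sum_neg_distrib] at hzero'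
  linarith

end SphericalMeans

/-- Theorem 3.3 (uniqueness form): a function `f = ∑ aₖ g(‖· - xₖ‖)`, where the radial
extension of `g` is a Schwartz function with nonzero integral, with pairwise distinct nodes
and pairwise distinct nonzero amplitudes, is uniquely determined by its spherical means
`∫_{S^{n-1}} f(y + tθ) dσ(θ)` over all radii `t ≥ 0`, with centers in a set `Γ` of
`n·m(m-1)/2 + n + 1` points, no `n + 1` of which lie on a common affine hyperplane. -/
theorem stmt2 (n m : ℕ) (hn : 2 ≤ n) (hm : 1 ≤ m)
    (g : ℝ → ℝ) (g₀ : SchwartzMap (EuclideanSpace ℝ (Fin n)) ℝ)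
    (hg₀ : ∀ x, g₀ x = g ‖x‖)
    (hgint : (∫ x, g₀ x) ≠ 0)
    (x x' : Fin m → EuclideanSpace ℝ (Fin n)) (a a' : Fin m → ℝ)
    (hx : Function.Injective x) (hx' : Function.Injective x')
    (ha0 : ∀ k, a k ≠ 0) (ha'0 : ∀ k, a' k ≠ 0)
    (ha : Function.Injective a) (ha' : Function.Injective a')
    (Γ : Finset (EuclideanSpace ℝ (Fin n)))
    (hΓcard : Γ.card = n * (m * (m - 1)) / 2 + n + 1)
    (hΓ : ∀ (θ : EuclideanSpace ℝ (Fin n)) (ρ : ℝ), ‖θ‖ = 1 →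
      (Γ.filter (fun y => ⟪y, θ⟫ = ρ)).card ≤ n)
    (hdata : ∀ y ∈ Γ, ∀ t : ℝ, 0 ≤ t →
      (∫ θ in Metric.sphere (0 : EuclideanSpace ℝ (Fin n)) 1,
          (∑ k, a k * g ‖y + t • θ - x k‖) ∂μH[(n : ℝ) - 1])
        = ∫ θ in Metric.sphere (0 : EuclideanSpace ℝ (Fin n)) 1,
          (∑ k, a' k * g ‖y + t • θ - x' k‖) ∂μH[(n : ℝ) - 1]) :
    ∃ σ : Equiv.Perm (Fin m), ∀ k, x' k = x (σ k) ∧ a' k = a (σ k) := by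
  classical
  obtain ⟨k, rfl⟩ : ∃ k, n = k + 1 := ⟨n - 1, by omega⟩
  have hfact : Fact (Module.finrank ℝ (EuclideanSpace ℝ (Fin (k + 1))) = k + 1) := ⟨by simp⟩
  have hbisector : ∀ u v : EuclideanSpace ℝ (Fin (k + 1)), u ≠ v →
      (Γ.filter fun y => ‖y - u‖ = ‖y - v‖).card ≤ k + 1 := by
    intro u v huv
    obtain ⟨θ, ρ, hθ, hiff⟩ := exists_unit_norm_sub_eq_norm_sub_iff huv
    simp_rw [hiff]
    convert! hΓ θ ρ hθ
  set G := Γ.filter fun y => Function.Injective fun i => ‖y - x i‖ with hG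
  have hGcard : k + 1 < G.card := by
    have hle : Γ.card ≤ G.card + m * (m - 1) / 2 * (k + 1) :=
      card_le_card_filter_injective_norm_sub Γ hbisector hx
    have hdiv : (k + 1) * (m * (m - 1)) / 2 = m * (m - 1) / 2 * (k + 1) := by
      rw [Nat.mul_div_assoc _ (Nat.even_mul_pred_self m).two_dvd, mul_comm]
    rw [hΓcard, hdiv] at hle
    omega
  have hperm : ∀ y ∈ G, ∃ τ : Equiv.Perm (Fin m),
      ∀ i, ‖y - x' (τ i)‖ ^ 2 = ‖y - x i‖ ^ 2 ∧ a' (τ i) = a i := by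
    intro y hy
    obtain ⟨hyΓ, hinj⟩ := Finset.mem_filter.mp hy
    refine exists_perm_of_sum_filter_eq (s := fun i => ‖y - x i‖ ^ 2)
      (s' := fun i => ‖y - x' i‖ ^ 2) ha0
      (fun i l hil => hinj ((sq_eq_sq₀ (norm_nonneg _) (norm_nonneg _)).mp hil)) ?_
    refine sum_filter_norm_sub_eq_of_sphericalMean_eq (k := k) g₀ hg₀ hgint x x' a a' y ?_
    simpa using hdata y hyΓ
  obtain ⟨y₀, hy₀⟩ := Finset.card_pos.mp (Nat.zero_lt_of_lt hGcard)
  obtain ⟨τ, hτ⟩ := hperm y₀ hy₀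
  have hnodes : ∀ i, x' (τ i) = x i := by
    intro i
    by_contra hne
    refine hGcard.not_ge ((Finset.card_le_card fun y hy => ?_).trans (hbisector _ _ hne))
    obtain ⟨τ', hτ'⟩ := hperm y hy
    have hττ' : τ' i = τ i := ha' ((hτ' i).2.trans (hτ i).2.symm)
    refine Finset.mem_filter.mpr ⟨(Finset.mem_filter.mp hy).1, ?_⟩
    rw [← sq_eq_sq₀ (norm_nonneg _) (norm_nonneg _), ← hττ', (hτ' i).1]
  exact ⟨τ.symm, fun i => ⟨by simpa using hnodes (τ.symm i), by simpa using (hτ (τ.symm i)).2⟩⟩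
end

section
/- Let n ≥ 2 and let λ_1,…,λ_n be real numbers with λ_i ≠ λ_j for i ≠ j. Let σ be a permutation of {1,2,…,n} that is different from the identity. Define the n×n real matrix M by M_{l,k} = λ_k^l − λ_{σ(k)}^l for l = 1,…,n (row index) and k = 1,…,n (column index). Then every vector v = (v_1,…,v_n) ∈ ℝ^n with M v = 0 has two equal components with different indices: there exist i ≠ j with v_i = v_j. -/
/-- Lemma 5.2: if `λ₁,…,λₙ` are distinct reals, `σ` is a non-identity permutation of
`{1,…,n}`, and `M` is the `n×n` matrix with entries `M_{l,k} = λₖˡ - λ_{σ(k)}ˡ`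
(`l = 1,…,n`), then every vector in the kernel of `M` has two equal components with
different indices. -/
theorem stmt3 (n : ℕ) (hn : 2 ≤ n) (lam : Fin n → ℝ)
    (hlam : Function.Injective lam)
    (σ : Equiv.Perm (Fin n)) (hσ : σ ≠ 1)
    (M : Matrix (Fin n) (Fin n) ℝ)
    (hM : ∀ l k : Fin n, M l k = lam k ^ ((l : ℕ) + 1) - lam (σ k) ^ ((l : ℕ) + 1))
    (v : Fin n → ℝ) (hv : M.mulVec v = 0) :
    ∃ i j : Fin n, i ≠ j ∧ v i = v j := by
  have hw : (fun k => v k - v (σ.symm k)) = 0 := by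
    refine Matrix.eq_zero_of_forall_pow_sum_mul_pow_eq_zero hlam fun i => ?_
    have hshift : ∑ k, v (σ.symm k) * lam k ^ (i : ℕ) = ∑ k, v k * lam (σ k) ^ (i : ℕ) := by
      rw [← Equiv.sum_comp σ]
      simp
    simp only [sub_mul, Finset.sum_sub_distrib, hshift]
    obtain ⟨_ | m, hi⟩ := i
    · simp
    · have h := congrFun hv ⟨m, by omega⟩
      simp only [Matrix.mulVec, dotProduct, hM, Pi.zero_apply] at h
      rw [← Finset.sum_sub_distrib, ← h]
      exact Finset.sum_congr rfl fun k _ => by ring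
  obtain ⟨k, hk⟩ : ∃ k, σ k ≠ k := by
    by_contra! h
    exact hσ (Equiv.ext h)
  refine ⟨σ k, k, hk, ?_⟩
  simpa [sub_eq_zero] using congrFun hw (σ k)
end

section
/- Let n ≥ 1 and let y_1,…,y_{2n+1} ∈ ℝ^n be points such that no affine hyperplane of ℝ^n contains more than n of them. Let θ, θ' be unit vectors in ℝ^n and ρ, ρ' ∈ ℝ, defining hyperplanes H = {x : ⟨x,θ⟩ = ρ} and H' = {x : ⟨x,θ'⟩ = ρ'}. If |ρ − ⟨y_l,θ⟩| = |ρ' − ⟨y_l,θ'⟩| for every l = 1,…,2n+1 (i.e. each y_l is at equal distance from H and H'), then H = H' as subsets of ℝ^n. -/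
open scoped RealInnerProductSpace

/-- If each of `2n + 1` points, no `n + 1` of which lie on a common affine hyperplane, is
at equal distance from the hyperplanes `H = {⟨x,θ⟩ = ρ}` and `H' = {⟨x,θ'⟩ = ρ'}`, then
`H = H'`. -/
theorem stmt13 (n : ℕ) (hn : 1 ≤ n) (y : Fin (2 * n + 1) → EuclideanSpace ℝ (Fin n))
    (hy_inj : Function.Injective y)
    (hy : ∀ (η : EuclideanSpace ℝ (Fin n)) (c : ℝ), η ≠ 0 →
      {l : Fin (2 * n + 1) | ⟪y l, η⟫ = c}.ncard ≤ n)
    (θ θ' : EuclideanSpace ℝ (Fin n)) (hθ : ‖θ‖ = 1) (hθ' : ‖θ'‖ = 1) (ρ ρ' : ℝ)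
    (hdist : ∀ l, |ρ - ⟪y l, θ⟫| = |ρ' - ⟪y l, θ'⟫|) :
    {x : EuclideanSpace ℝ (Fin n) | ⟪x, θ⟫ = ρ}
      = {x : EuclideanSpace ℝ (Fin n) | ⟪x, θ'⟫ = ρ'} := by
  have card_le : ∀ (η : EuclideanSpace ℝ (Fin n)) (c : ℝ), ¬ (η = 0 ∧ c = 0) →
      {l : Fin (2 * n + 1) | ⟪y l, η⟫ = c}.ncard ≤ n := by
    intro η c h
    by_cases hη : η = 0
    · have hc : (0 : ℝ) ≠ c := fun hc => h ⟨hη, hc.symm⟩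
      simp [hη, hc]
    · exact hy η c hη
  have cover : {l | ⟪y l, θ - θ'⟫ = ρ - ρ'} ∪ {l | ⟪y l, θ + θ'⟫ = ρ + ρ'} = Set.univ := by
    refine Set.eq_univ_of_forall fun l => ?_
    simp only [Set.mem_union, Set.mem_ofPred_eq, inner_sub_right, inner_add_right]
    rcases abs_eq_abs.mp (hdist l) with h | h
    · left; linarith
    · right; linarith
  have degenerate : (θ - θ' = 0 ∧ ρ - ρ' = 0) ∨ (θ + θ' = 0 ∧ ρ + ρ' = 0) := by
    by_contra! h
    have h₁ := card_le (θ - θ') (ρ - ρ') fun h' => h.1 h'.1 h'.2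
    have h₂ := card_le (θ + θ') (ρ + ρ') fun h' => h.2 h'.1 h'.2
    have h₃ := Set.ncard_union_le {l | ⟪y l, θ - θ'⟫ = ρ - ρ'} {l | ⟪y l, θ + θ'⟫ = ρ + ρ'}
    rw [cover, Set.ncard_univ, Nat.card_eq_fintype_card, Fintype.card_fin] at h₃
    omega
  rcases degenerate with ⟨h, h'⟩ | ⟨h, h'⟩
  · rw [sub_eq_zero.mp h, sub_eq_zero.mp h']
  · rw [eq_neg_of_add_eq_zero_left h, eq_neg_of_add_eq_zero_left h']
    simp only [inner_neg_right, neg_inj]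
end

section
/- Let n ≥ 1, m ≥ 1, let θ_1,…,θ_m be unit vectors in ℝ^n and ρ_1,…,ρ_m ∈ ℝ such that the hyperplanes H_k = {x : ⟨x,θ_k⟩ = ρ_k}, k = 1,…,m, are pairwise distinct as subsets of ℝ^n. Let Γ ⊆ ℝ^n be a finite set of at least n·m(m−1) + 2n + 1 distinct points such that no affine hyperplane of ℝ^n contains more than n points of Γ. Then there exist at least 2n+1 points y ∈ Γ satisfying |ρ_i − ⟨y,θ_i⟩| ≠ |ρ_j − ⟨y,θ_j⟩| for all i ≠ j, 1 ≤ i,j ≤ m. -/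
open scoped RealInnerProductSpace

/-- If no hyperplane contains more than `k` points of `Γ`, then neither does the solution set of
`⟪y, u - ε • v⟫ = a - ε * b` when `ε ≠ 0` and `⟪x, u⟫ = a`, `⟪x, v⟫ = b` define distinct sets. -/
theorem card_filter_inner_sub_smul_le {E : Type*} [NormedAddCommGroup E] [InnerProductSpace ℝ E]
    {k : ℕ} {Γ : Finset E}
    (hΓ : ∀ (η : E) (c : ℝ), η ≠ 0 → (Γ.filter (fun y => ⟪y, η⟫ = c)).card ≤ k)
    {u v : E} {a b ε : ℝ} (hε : ε ≠ 0) (h : {x : E | ⟪x, u⟫ = a} ≠ {x : E | ⟪x, v⟫ = b}) :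
    (Γ.filter (fun y => ⟪y, u - ε • v⟫ = a - ε * b)).card ≤ k := by
  by_cases hη : u - ε • v = 0
  · have hu : u = ε • v := sub_eq_zero.mp hη
    have hc : a - ε * b ≠ 0 := by
      intro hc
      have ha : a = ε * b := sub_eq_zero.mp hc
      apply h
      ext x
      simp [hu, ha, inner_smul_right, hε]
    simp [hη, hc.symm]
  · exact hΓ _ _ hη

/-- If `Γ` has at least `n·m(m-1) + 2n + 1` points and no affine hyperplane contains more
than `n` of them, then at least `2n + 1` points of `Γ` have pairwise distinct distances to
the pairwise distinct hyperplanes `Hₖ = {⟨x,θₖ⟩ = ρₖ}`. -/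
theorem stmt15 (n m : ℕ) (hn : 1 ≤ n) (hm : 1 ≤ m)
    (θ : Fin m → EuclideanSpace ℝ (Fin n)) (ρ : Fin m → ℝ)
    (hθ : ∀ k, ‖θ k‖ = 1)
    (hH : ∀ i j : Fin m, i ≠ j →
      {x : EuclideanSpace ℝ (Fin n) | ⟪x, θ i⟫ = ρ i}
        ≠ {x : EuclideanSpace ℝ (Fin n) | ⟪x, θ j⟫ = ρ j})
    (Γ : Finset (EuclideanSpace ℝ (Fin n)))
    (hΓcard : n * (m * (m - 1)) + 2 * n + 1 ≤ Γ.card)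
    (hΓ : ∀ (η : EuclideanSpace ℝ (Fin n)) (c : ℝ), η ≠ 0 →
      (Γ.filter (fun y => ⟪y, η⟫ = c)).card ≤ n) :
    2 * n + 1 ≤ (Γ.filter (fun y =>
      ∀ i j : Fin m, i ≠ j → |ρ i - ⟪y, θ i⟫| ≠ |ρ j - ⟪y, θ j⟫|)).card := by
  classical
  let ε : Fin m × Fin m → ℝ := fun p => if p.1 < p.2 then 1 else -1
  let S : Fin m × Fin m → Finset (EuclideanSpace ℝ (Fin n)) := fun p =>
    Γ.filter (fun y => ⟪y, θ p.1 - ε p • θ p.2⟫ = ρ p.1 - ε p * ρ p.2)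
  have hS : ∀ p ∈ (Finset.univ : Finset (Fin m)).offDiag, (S p).card ≤ n := by
    intro p hp
    have hε : ε p ≠ 0 := by
      simp only [ε]
      split_ifs <;> norm_num
    exact card_filter_inner_sub_smul_le hΓ hε (hH _ _ (Finset.mem_offDiag.mp hp).2.2)
  have hU := Finset.card_biUnion_le_card_mul _ S n hS
  have hbad : Γ.filter (fun y =>
      ¬ ∀ i j : Fin m, i ≠ j → |ρ i - ⟪y, θ i⟫| ≠ |ρ j - ⟪y, θ j⟫|) ⊆
      (Finset.univ : Finset (Fin m)).offDiag.biUnion S := by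
    intro y hy
    obtain ⟨hyΓ, hy⟩ := Finset.mem_filter.mp hy
    have hlt : ∃ i j : Fin m, i < j ∧ |ρ i - ⟪y, θ i⟫| = |ρ j - ⟪y, θ j⟫| := by
      push Not at hy
      obtain ⟨i, j, hij, h⟩ := hy
      rcases lt_or_gt_of_ne hij with hij | hij
      · exact ⟨i, j, hij, h⟩
      · exact ⟨j, i, hij, h.symm⟩
    obtain ⟨i, j, hij, h⟩ := hlt
    rw [Finset.mem_biUnion]
    rcases abs_eq_abs.mp h with h | h
    · refine ⟨(i, j), by simp [hij.ne], Finset.mem_filter.mpr ⟨hyΓ, ?_⟩⟩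
      simp only [ε, hij, if_true, inner_sub_right, inner_smul_right]
      linarith
    · refine ⟨(j, i), by simp [hij.ne'], Finset.mem_filter.mpr ⟨hyΓ, ?_⟩⟩
      simp only [ε, hij.not_gt, if_false, inner_sub_right, inner_smul_right]
      linarith
  have hcard : (Finset.univ : Finset (Fin m)).offDiag.card = m * (m - 1) := by
    simp [Finset.offDiag_card, Nat.mul_sub]
  have hle := (Finset.card_le_card hbad).trans hU
  rw [hcard, mul_comm] at hle
  have hsplit := Finset.card_filter_add_card_filter_not (s := Γ) (fun y =>
    ∀ i j : Fin m, i ≠ j → |ρ i - ⟪y, θ i⟫| ≠ |ρ j - ⟪y, θ j⟫|)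
  convert (by omega : 2 * n + 1 ≤ (Γ.filter (fun y =>
    ∀ i j : Fin m, i ≠ j → |ρ i - ⟪y, θ i⟫| ≠ |ρ j - ⟪y, θ j⟫|)).card)
end

section
/- Let m ≥ 1, let λ_1,…,λ_m be pairwise distinct reals, let a_1,…,a_m be pairwise distinct reals, and let σ be a permutation of {1,…,m}. If ∑_{k=1}^m a_k λ_k^l = ∑_{k=1}^m a_k λ_{σ(k)}^l for every l = 1,…,m, then σ is the identity permutation. -/
/-- If `λ₁,…,λₘ` are pairwise distinct reals, `a₁,…,aₘ` are pairwise distinct reals, and a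
permutation `σ` of the indices satisfies `∑ₖ aₖ λₖˡ = ∑ₖ aₖ λ_{σ(k)}ˡ` for `l = 1,…,m`,
then `σ` is the identity. -/
theorem stmt16 (m : ℕ) (hm : 1 ≤ m) (lam a : Fin m → ℝ)
    (hlam : Function.Injective lam) (ha : Function.Injective a)
    (σ : Equiv.Perm (Fin m))
    (h : ∀ l : ℕ, 1 ≤ l → l ≤ m →
      ∑ k, a k * lam k ^ l = ∑ k, a k * lam (σ k) ^ l) :
    σ = 1 := by
  have hv : (fun k => a k - a (σ⁻¹ k)) = 0 := by
    refine Matrix.eq_zero_of_forall_pow_sum_mul_pow_eq_zero hlam fun l => ?_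
    have hreindex : ∑ k, a k * lam (σ k) ^ (l : ℕ) = ∑ k, a (σ⁻¹ k) * lam k ^ (l : ℕ) := by
      rw [← Equiv.sum_comp σ fun k => a (σ⁻¹ k) * lam k ^ (l : ℕ)]
      simp
    simp only [sub_mul, Finset.sum_sub_distrib]
    rw [← hreindex, sub_eq_zero]
    rcases Nat.eq_zero_or_pos (l : ℕ) with hl | hl
    · simp [hl]
    · exact h l hl l.isLt.le
  rw [← inv_eq_one]
  ext1 k
  exact ha (sub_eq_zero.mp (congrFun hv k)).symm
end

section
/- Let n ≥ 2, let λ_1,…,λ_n be pairwise distinct reals, and let σ be a permutation of {1,…,n} such that σ(B) ≠ B for every nonempty proper subset B ⊊ {1,…,n} (equivalently, σ is a single n-cycle). Define the n×n matrix M by M_{l,k} = λ_k^l − λ_{σ(k)}^l for l,k ∈ {1,…,n}. Then the kernel of M is exactly the one-dimensional span of the all-ones vector (1,1,…,1). -/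
/-- If `v` annihilates the differences `lam k ^ l - lam (σ k) ^ l` for `l = 1, …, n` and the nodes
`lam k` are distinct, then `v` is constant on the orbits of `σ`. -/
theorem apply_perm_eq_of_sum_mul_pow_sub_eq_zero {n : ℕ} {lam : Fin n → ℝ}
    (hlam : Function.Injective lam) (σ : Equiv.Perm (Fin n)) (v : Fin n → ℝ)
    (h : ∀ l : Fin n, ∑ k, (lam k ^ ((l : ℕ) + 1) - lam (σ k) ^ ((l : ℕ) + 1)) * v k = 0)
    (k : Fin n) : v (σ k) = v k := by
  have hw : (fun j => v j - v (σ.symm j)) = 0 := by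
    refine Matrix.eq_zero_of_forall_pow_sum_mul_pow_eq_zero hlam fun i => ?_
    have key : ∑ j, (v j - v (σ.symm j)) * lam j ^ (i : ℕ)
        = ∑ j, (lam j ^ (i : ℕ) - lam (σ j) ^ (i : ℕ)) * v j := by
      have reindex := Equiv.sum_comp σ fun j => v (σ.symm j) * lam j ^ (i : ℕ)
      simp only [Equiv.symm_apply_apply] at reindex
      simp only [sub_mul, Finset.sum_sub_distrib, ← reindex]
      simp only [mul_comm]
    rw [key]
    obtain ⟨_ | m, hi⟩ := i
    · simp
    · exact h ⟨m, by omega⟩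
  have hk := congrFun hw (σ k)
  simp only [Equiv.symm_apply_apply, Pi.zero_apply] at hk
  linarith

/-- The case `k = 1` in the proof of Lemma 5.2: if `λ₁,…,λₙ` are pairwise distinct and the
permutation `σ` has no nonempty proper invariant subset (i.e. it is a single `n`-cycle),
then the kernel of the matrix `M_{l,k} = λₖˡ - λ_{σ(k)}ˡ` (`l = 1,…,n`) is exactly the span
of the all-ones vector. -/
theorem stmt17 (n : ℕ) (hn : 2 ≤ n) (lam : Fin n → ℝ)
    (hlam : Function.Injective lam)
    (σ : Equiv.Perm (Fin n))
    (hσ : ∀ B : Finset (Fin n), B.Nonempty → B ≠ Finset.univ → B.image σ ≠ B)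
    (M : Matrix (Fin n) (Fin n) ℝ)
    (hM : ∀ l k : Fin n, M l k = lam k ^ ((l : ℕ) + 1) - lam (σ k) ^ ((l : ℕ) + 1)) :
    ∀ v : Fin n → ℝ, M.mulVec v = 0 ↔ ∃ c : ℝ, v = Function.const (Fin n) c := by
  intro v
  have hmul : ∀ l, M.mulVec v l
      = ∑ k, (lam k ^ ((l : ℕ) + 1) - lam (σ k) ^ ((l : ℕ) + 1)) * v k := fun l => by
    simp only [Matrix.mulVec, dotProduct, hM]
  constructor
  · intro hv
    have hinv := apply_perm_eq_of_sum_mul_pow_sub_eq_zero hlam σ v fun l => by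
      rw [← hmul, hv, Pi.zero_apply]
    let z : Fin n := ⟨0, by omega⟩
    let B : Finset (Fin n) := {k | v k = v z}
    have hB : B = Finset.univ := by
      by_contra hne
      refine hσ B ⟨z, by simp [B]⟩ hne (Finset.eq_of_subset_of_card_le ?_ ?_)
      · intro j hj
        obtain ⟨k, hk, rfl⟩ := Finset.mem_image.mp hj
        simpa [B, hinv] using hk
      · rw [Finset.card_image_of_injective _ σ.injective]
    refine ⟨v z, funext fun k => ?_⟩
    have hk : k ∈ B := hB ▸ Finset.mem_univ k
    simpa [B] using hk
  · rintro ⟨c, rfl⟩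
    funext l
    have reindex := Equiv.sum_comp σ fun k => lam k ^ ((l : ℕ) + 1)
    simp only [hmul, Function.const_apply, ← Finset.sum_mul, Finset.sum_sub_distrib, reindex,
      sub_self, zero_mul, Pi.zero_apply]
end
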